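/- If z : [0,∞) → ℝ is a càdlàg function and z̄ : [0,∞) → ℝ is a function satisfying E[h(t, Y_t − E[Y_t] + z̄_t)] = z_t for every t ≥ 0, then z̄ is càdlàg on [0,∞). -/

import Mathlib

open MeasureTheory Filter Set Function Topology

noncomputable section

/-- A function with values in a topological space is càdlàg on `[0,∞)`:
right-continuous at every `t ≥ 0` and admitting a left limit at every `t > 0`. -/
def CadlagOn {E : Type*} [TopologicalSpace E] (f : ℝ → E) : Prop :=
  (∀ t : ℝ, 0 ≤ t → ContinuousWithinAt f (Set.Ici t) t) ∧
  ∀ t : ℝ, 0 < t → ∃ L : E, Filter.Tendsto f (nhdsWithin t (Set.Iio t)) (nhds L)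

/-- Condition (H) on `h : [0,∞) × ℝ → ℝ` with constants `Mh, Lh, ch, Ch`. -/
structure CondH (h : ℝ → ℝ → ℝ) (Mh Lh ch Ch : ℝ) : Prop where
  meas : Measurable (Function.uncurry h)
  Mh_pos : 0 < Mh
  Lh_pos : 0 < Lh
  ch_pos : 0 < ch
  Ch_pos : 0 < Ch
  growth : ∀ t x : ℝ, 0 ≤ t → |h t x| ≤ Mh * (1 + |x|)
  strict_mono : ∀ t : ℝ, 0 ≤ t → StrictMono (h t)
  lip_time : ∀ s t x : ℝ, 0 ≤ s → 0 ≤ t → |h t x - h s x| ≤ Lh * |t - s|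
  lip_lower : ∀ t x y : ℝ, 0 ≤ t → ch * |x - y| ≤ |h t x - h t y|
  lip_upper : ∀ t x y : ℝ, 0 ≤ t → |h t x - h t y| ≤ Ch * |x - y|

/-- A process with càdlàg paths, integrable values, and values uniformly integrable
on every compact time interval. -/
structure NiceProcess {Ω : Type*} [MeasurableSpace Ω] (μ : Measure Ω) (Y : ℝ → Ω → ℝ) : Prop where
  cadlag : ∀ ω, CadlagOn fun t => Y t ω
  integrable : ∀ t : ℝ, 0 ≤ t → Integrable (Y t) μ
  unifInt : ∀ q : ℝ, 0 ≤ q → UniformIntegrable (fun t : Set.Icc (0:ℝ) q => Y t.1) 1 μ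

/-- Solution of the Skorokhod problem with mean minimality condition and two constraints
associated with `(h, Y, l, u)`. -/
def MeanSP {Ω : Type*} [MeasurableSpace Ω] (μ : Measure Ω) (h : ℝ → ℝ → ℝ)
    (Y : ℝ → Ω → ℝ) (l u : ℝ → ℝ) (X : ℝ → Ω → ℝ) (k : ℝ → ℝ) : Prop :=
  (∀ ω, CadlagOn fun t => X t ω) ∧ CadlagOn k ∧ k 0 = 0 ∧
  (∀ t : ℝ, 0 ≤ t → ∀ ω, X t ω = Y t ω + k t) ∧
  (∀ t : ℝ, 0 ≤ t → (∫ ω, h t (X t ω) ∂μ) ∈ Set.Icc (l t) (u t)) ∧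
  (∀ t q : ℝ, 0 ≤ t → t ≤ q →
    ((∀ s : ℝ, t < s → s ≤ q → (∫ ω, h s (X s ω) ∂μ) < u s) → 0 ≤ k q - k t) ∧
    ((∀ s : ℝ, t < s → s ≤ q → l s < ∫ ω, h s (X s ω) ∂μ) → k q - k t ≤ 0)) ∧
  ∀ t : ℝ, 0 < t →
    ((∫ ω, h t (X t ω) ∂μ) < u t → 0 ≤ k t - Function.leftLim k t) ∧
    (l t < ∫ ω, h t (X t ω) ∂μ → k t - Function.leftLim k t ≤ 0)

/-- Solution of the deterministic Skorokhod problem with two time-dependent barriers. -/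
def DetSP (y lb ub x k : ℝ → ℝ) : Prop :=
  CadlagOn x ∧ CadlagOn k ∧ k 0 = 0 ∧
  (∀ t : ℝ, 0 ≤ t → x t = y t + k t ∧ x t ∈ Set.Icc (lb t) (ub t)) ∧
  (∀ t q : ℝ, 0 ≤ t → t ≤ q →
    ((∀ s : ℝ, t < s → s ≤ q → x s < ub s) → 0 ≤ k q - k t) ∧
    ((∀ s : ℝ, t < s → s ≤ q → lb s < x s) → k q - k t ≤ 0)) ∧
  ∀ t : ℝ, 0 < t →
    (x t < ub t → 0 ≤ k t - Function.leftLim k t) ∧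
    (lb t < x t → k t - Function.leftLim k t ≤ 0)

/-- Solution of the Skorokhod problem with mean minimality condition and a single
lower barrier `l`.  The minimality condition `∫ (E[h(s,X_s)] - l_s) dk_s = 0` is expressed
through any measure `ν` that agrees with the Lebesgue–Stieltjes measure of `k` on `[0,∞)`. -/
def MeanSPLower {Ω : Type*} [MeasurableSpace Ω] (μ : Measure Ω) (h : ℝ → ℝ → ℝ)
    (Y : ℝ → Ω → ℝ) (l : ℝ → ℝ) (X : ℝ → Ω → ℝ) (k : ℝ → ℝ) : Prop :=
  (∀ ω, CadlagOn fun t => X t ω) ∧ CadlagOn k ∧ k 0 = 0 ∧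
  (∀ t : ℝ, 0 ≤ t → ∀ ω, X t ω = Y t ω + k t) ∧
  (∀ t : ℝ, 0 ≤ t → l t ≤ ∫ ω, h t (X t ω) ∂μ) ∧
  MonotoneOn k (Set.Ici 0) ∧
  ∀ ν : Measure ℝ,
    (∀ a b : ℝ, 0 ≤ a → a ≤ b → ν (Set.Ioc a b) = ENNReal.ofReal (k b - k a)) →
    ν {0} = 0 →
    ∀ t : ℝ, 0 ≤ t → (∫ s in Set.Icc 0 t, ((∫ ω, h s (X s ω) ∂μ) - l s) ∂ν) = 0

/-- Solution of the Skorokhod problem with mean minimality condition and a single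
upper barrier `u`.  The minimality condition `∫ (u_s - E[h(s,X_s)]) d(-k)_s = 0` is expressed
through any measure `ν` that agrees with the Lebesgue–Stieltjes measure of `-k` on `[0,∞)`. -/
def MeanSPUpper {Ω : Type*} [MeasurableSpace Ω] (μ : Measure Ω) (h : ℝ → ℝ → ℝ)
    (Y : ℝ → Ω → ℝ) (u : ℝ → ℝ) (X : ℝ → Ω → ℝ) (k : ℝ → ℝ) : Prop :=
  (∀ ω, CadlagOn fun t => X t ω) ∧ CadlagOn k ∧ k 0 = 0 ∧
  (∀ t : ℝ, 0 ≤ t → ∀ ω, X t ω = Y t ω + k t) ∧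
  (∀ t : ℝ, 0 ≤ t → (∫ ω, h t (X t ω) ∂μ) ≤ u t) ∧
  AntitoneOn k (Set.Ici 0) ∧
  ∀ ν : Measure ℝ,
    (∀ a b : ℝ, 0 ≤ a → a ≤ b → ν (Set.Ioc a b) = ENNReal.ofReal (k a - k b)) →
    ν {0} = 0 →
    ∀ t : ℝ, 0 ≤ t → (∫ s in Set.Icc 0 t, (u s - ∫ ω, h s (X s ω) ∂μ) ∂ν) = 0

/-- `OscN x η q` is the number of `η`-oscillations of `x` on `[0,q]`: the largest `m`
for which there are `0 ≤ t₁ ≤ t₂ ≤ ⋯ ≤ t_{2m} ≤ q` with `|x(t_{2i}) - x(t_{2i-1})| > η`. -/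
def OscN (x : ℝ → ℝ) (η q : ℝ) : ℕ :=
  sSup {m : ℕ | ∃ a b : Fin m → ℝ,
    (∀ i, 0 ≤ a i ∧ a i ≤ b i ∧ b i ≤ q) ∧
    (∀ i j, i < j → b i ≤ a j) ∧
    ∀ i, η < |x (b i) - x (a i)|}

/-- The left limit at `t` of a càdlàg function on `[0,∞)`, with the convention
`x(0-) = x(0)`. -/
def leftLimAt {E : Type*} [TopologicalSpace E] (x : ℝ → E) (t : ℝ) : E :=
  if t = 0 then x 0 else Function.leftLim x t

/-- Convergence `xₙ → x` in the Skorokhod `J₁` topology on `D([0,∞), E)`, expressed via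
the sequence characterization used in the paper. -/
def DConvOn {E : Type*} [TopologicalSpace E] (xs : ℕ → ℝ → E) (x : ℝ → E) : Prop :=
  ∀ t : ℝ, 0 ≤ t → ∃ tn : ℕ → ℝ,
    (∀ n, 0 ≤ tn n) ∧ Filter.Tendsto tn Filter.atTop (nhds t) ∧
    ∀ t' t'' : ℕ → ℝ, (∀ n, 0 ≤ t' n) → (∀ n, 0 ≤ t'' n) →
      Filter.Tendsto t' Filter.atTop (nhds t) → Filter.Tendsto t'' Filter.atTop (nhds t) →
      (∀ n, t' n < tn n ∧ tn n ≤ t'' n) →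
      Filter.Tendsto (fun n => xs n (t' n)) Filter.atTop (nhds (leftLimAt x t)) ∧
      Filter.Tendsto (fun n => xs n (t'' n)) Filter.atTop (nhds (x t))

/-!
Put `w = zb - m` with `m t = E[Y_t]`, fix `t` and approach it from one side. Uniform integrability
upgrades the pathwise convergence of `Y` to convergence in `L¹`, so `G_s b = E[h(s, Y_s + b)]`
converges to some `G b` for every `b`, because the maps `h(s, ·)` are equi-Lipschitz. All the
`G_s` have slopes at least `c > 0`, and this survives in the limit `G`. Hence the solutions of
`G_s (w s) = z s` converge to any solution of `G b = lim z`. From the right `w t` is such a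
solution; from the left one exists because `G` is continuous with slopes at least `c`. So `w` is
càdlàg, and so is `-m`, which is the solution for `h(t, x) = x` and `z = 0`.
-/

open scoped NNReal

/-- A real function is strongly monotone with modulus `c` if all its slopes are at least `c`.
For positive `c` this is the quantitative strict monotonicity that makes equations `g x = z`
solvable, stably in `g` and `z`. -/
def StronglyMonotone (c : ℝ) (g : ℝ → ℝ) : Prop :=
  ∀ ⦃x y⦄, x ≤ y → c * (y - x) ≤ g y - g x

namespace StronglyMonotone

variable {ι : Type*} {l : Filter ι} {c : ℝ}

lemma mul_abs_sub_le {g : ℝ → ℝ} (hg : StronglyMonotone c g) (x y : ℝ) :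
    c * |x - y| ≤ |g x - g y| := by
  wlog hyx : y ≤ x generalizing x y
  · rw [abs_sub_comm x, abs_sub_comm (g x)]
    exact this y x (le_of_not_ge hyx)
  · rw [abs_of_nonneg (sub_nonneg.2 hyx)]
    exact (hg hyx).trans (le_abs_self _)

lemma of_tendsto [l.NeBot] {g : ι → ℝ → ℝ} {g' : ℝ → ℝ}
    (hg : ∀ᶠ i in l, StronglyMonotone c (g i))
    (hlim : ∀ x, Tendsto (fun i => g i x) l (𝓝 (g' x))) : StronglyMonotone c g' :=
  fun x y hxy => ge_of_tendsto ((hlim y).sub (hlim x)) (hg.mono fun _ hi => hi hxy)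

lemma surjective (hc : 0 < c) {g : ℝ → ℝ} (hg : StronglyMonotone c g) (hcont : Continuous g) :
    Surjective g := by
  have h_line : Tendsto (fun x => g 0 + c * x) atTop atTop :=
    tendsto_atTop_add_const_left _ _ (tendsto_id.const_mul_atTop hc)
  have h_line' : Tendsto (fun x => g 0 + c * x) atBot atBot :=
    tendsto_atBot_add_const_left _ _ (tendsto_id.const_mul_atBot hc)
  refine hcont.surjective (tendsto_atTop_mono' _ ?_ h_line) (tendsto_atBot_mono' _ ?_ h_line')
  · filter_upwards [eventually_ge_atTop 0] with x hx
    linarith [hg hx]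
  · filter_upwards [eventually_le_atBot 0] with x hx
    linarith [hg hx]

lemma tendsto_of_tendsto_sub (hc : 0 < c) {g : ι → ℝ → ℝ} {a : ι → ℝ} {b : ℝ}
    (hg : ∀ᶠ i in l, StronglyMonotone c (g i))
    (h : Tendsto (fun i => g i (a i) - g i b) l (𝓝 0)) : Tendsto a l (𝓝 b) := by
  rw [tendsto_iff_dist_tendsto_zero]
  refine squeeze_zero' (Eventually.of_forall fun _ => dist_nonneg) ?_
    (by simpa using h.abs.div_const c)
  filter_upwards [hg] with i hi
  rw [Real.dist_eq, le_div_iff₀' hc]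
  exact hi.mul_abs_sub_le _ _

end StronglyMonotone

section Integral

variable {Ω ι E F : Type*} [MeasurableSpace Ω] {μ : Measure Ω} {l : Filter ι}
  [NormedAddCommGroup E] [NormedAddCommGroup F] {K : ℝ≥0}

lemma tendsto_eLpNorm_sub_of_unifIntegrable [IsFiniteMeasure μ] [l.IsCountablyGenerated]
    {p : ENNReal} (hp : 1 ≤ p) (hp_top : p ≠ ⊤) {f : ι → Ω → E} {f' : Ω → E}
    (hf : ∀ i, AEStronglyMeasurable (f i) μ) (hf' : MemLp f' p μ) (hui : UnifIntegrable f p μ)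
    (hlim : ∀ᵐ ω ∂μ, Tendsto (fun i => f i ω) l (𝓝 (f' ω))) :
    Tendsto (fun i => eLpNorm (f i - f') p μ) l (𝓝 0) := by
  refine tendsto_of_seq_tendsto fun u hu => ?_
  have hui_seq : UnifIntegrable (fun n => f (u n)) p μ := fun ε hε =>
    let ⟨δ, hδ, hfδ⟩ := hui hε
    ⟨δ, hδ, fun n => hfδ (u n)⟩
  exact tendsto_Lp_finite_of_tendsto_ae hp hp_top (fun n => hf (u n)) hf' hui_seq
    (hlim.mono fun _ hω => hω.comp hu)

lemma tendsto_integral_norm_sub_of_uniformIntegrable [IsFiniteMeasure μ]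
    [l.NeBot] [l.IsCountablyGenerated] {f : ι → Ω → E} {f' : Ω → E}
    (hf : UniformIntegrable f 1 μ)
    (hlim : ∀ᵐ ω ∂μ, Tendsto (fun i => f i ω) l (𝓝 (f' ω))) :
    Tendsto (fun i => ∫ ω, ‖f i ω - f' ω‖ ∂μ) l (𝓝 0) := by
  have hf' : MemLp f' 1 μ := hf.memLp_of_ae_tendsto hlim
  have h_eLpNorm := (ENNReal.tendsto_toReal ENNReal.zero_ne_top).comp
    (tendsto_eLpNorm_sub_of_unifIntegrable le_rfl ENNReal.one_ne_top hf.1 hf' hf.2.1 hlim)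
  refine h_eLpNorm.congr fun i => ?_
  rw [comp_apply, eLpNorm_one_eq_lintegral_enorm]
  exact (integral_norm_eq_lintegral_enorm ((hf.1 i).sub hf'.1)).symm

lemma integrable_and_tendsto_integral_norm_sub_of_uniformIntegrable_mem [IsFiniteMeasure μ]
    [l.NeBot] [l.IsCountablyGenerated] {s : Set ι} (hs : s ∈ l) {f : ι → Ω → E} {f' : Ω → E}
    (hf : UniformIntegrable (fun i : s => f i) 1 μ)
    (hlim : ∀ᵐ ω ∂μ, Tendsto (fun i => f i ω) l (𝓝 (f' ω))) :
    Integrable f' μ ∧ Tendsto (fun i => ∫ ω, ‖f i ω - f' ω‖ ∂μ) l (𝓝 0) := by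
  have h_range : range ((↑) : s → ι) ∈ l := by rwa [Subtype.range_coe]
  have : (comap ((↑) : s → ι) l).NeBot := NeBot.comap_of_range_mem ‹_› h_range
  have hlim_s : ∀ᵐ ω ∂μ, Tendsto (fun i : s => f i ω) (comap (↑) l) (𝓝 (f' ω)) :=
    hlim.mono fun _ hω => hω.comp tendsto_comap
  exact ⟨hf.integrable_of_ae_tendsto hlim_s,
    (tendsto_comap'_iff h_range).1 (tendsto_integral_norm_sub_of_uniformIntegrable hf hlim_s)⟩

lemma integrable_comp_of_lipschitzWith [IsFiniteMeasure μ] {g : E → F}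
    (hg : LipschitzWith K g) {X : Ω → E} (hX : Integrable X μ) :
    Integrable (fun ω => g (X ω)) μ := by
  have h_sub : LipschitzWith K fun x => g x - g 0 := by
    simpa using hg.sub (LipschitzWith.const (g 0))
  have h_int : Integrable (fun ω => g (X ω) - g 0) μ :=
    memLp_one_iff_integrable.1 (h_sub.comp_memLp (sub_self _) (memLp_one_iff_integrable.2 hX))
  exact (h_int.add (integrable_const (g 0))).congr (ae_of_all μ fun _ => sub_add_cancel _ _)

variable [NormedSpace ℝ F]

lemma norm_integral_comp_sub_le_of_lipschitzWith [IsFiniteMeasure μ] {g : E → F}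
    (hg : LipschitzWith K g) {X X' : Ω → E} (hX : Integrable X μ) (hX' : Integrable X' μ) :
    ‖∫ ω, g (X ω) ∂μ - ∫ ω, g (X' ω) ∂μ‖ ≤ K * ∫ ω, ‖X ω - X' ω‖ ∂μ := by
  rw [← integral_sub (integrable_comp_of_lipschitzWith hg hX)
    (integrable_comp_of_lipschitzWith hg hX'), ← integral_const_mul]
  exact norm_integral_le_of_norm_le ((hX.sub hX').norm.const_mul _)
    (Eventually.of_forall fun ω => hg.norm_sub_le (X ω) (X' ω))

lemma tendsto_integral_comp_of_lipschitzWith [IsFiniteMeasure μ] [l.IsCountablyGenerated]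
    {g : ι → E → F} {g' : E → F} (hg : ∀ᶠ i in l, LipschitzWith K (g i))
    (hlim : ∀ x, Tendsto (fun i => g i x) l (𝓝 (g' x))) {X : Ω → E} (hX : Integrable X μ) :
    Tendsto (fun i => ∫ ω, g i (X ω) ∂μ) l (𝓝 (∫ ω, g' (X ω) ∂μ)) := by
  refine tendsto_integral_filter_of_dominated_convergence (fun ω => K * ‖X ω‖ + (‖g' 0‖ + 1))
    (hg.mono fun i hi => (integrable_comp_of_lipschitzWith hi hX).1) ?_
    ((hX.norm.const_mul _).add (integrable_const _)) (Eventually.of_forall fun ω => hlim (X ω))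
  have h_zero : ∀ᶠ i in l, ‖g i 0‖ ≤ ‖g' 0‖ + 1 :=
    (hlim 0).norm.eventually_le_const (lt_add_one _)
  filter_upwards [hg, h_zero] with i hi hi0
  refine Eventually.of_forall fun ω => ?_
  calc ‖g i (X ω)‖ ≤ ‖g i (X ω) - g i 0‖ + ‖g i 0‖ := norm_le_norm_sub_add _ _
    _ ≤ K * ‖X ω‖ + (‖g' 0‖ + 1) := by
      gcongr
      simpa using hi.norm_sub_le (X ω) 0

lemma tendsto_integral_comp_of_tendsto_integral_norm_sub [IsFiniteMeasure μ]
    [l.IsCountablyGenerated] {g : ι → E → F} {g' : E → F}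
    (hg : ∀ᶠ i in l, LipschitzWith K (g i))
    (hlim : ∀ x, Tendsto (fun i => g i x) l (𝓝 (g' x))) {X : ι → Ω → E} {X' : Ω → E}
    (hX : ∀ᶠ i in l, Integrable (X i) μ) (hX' : Integrable X' μ)
    (hXlim : Tendsto (fun i => ∫ ω, ‖X i ω - X' ω‖ ∂μ) l (𝓝 0)) :
    Tendsto (fun i => ∫ ω, g i (X i ω) ∂μ) l (𝓝 (∫ ω, g' (X' ω) ∂μ)) := by
  have h_diff : Tendsto (fun i => ∫ ω, g i (X i ω) ∂μ - ∫ ω, g i (X' ω) ∂μ) l (𝓝 0) := by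
    refine squeeze_zero_norm' ?_ (by simpa using hXlim.const_mul (K : ℝ))
    filter_upwards [hg, hX] with i hgi hXi
    exact norm_integral_comp_sub_le_of_lipschitzWith hgi hXi hX'
  simpa using h_diff.add (tendsto_integral_comp_of_lipschitzWith hg hlim hX')

end Integral

section Shift

variable {Ω : Type*} [MeasurableSpace Ω] {μ : Measure Ω} [IsProbabilityMeasure μ]
  {c : ℝ} {K : ℝ≥0}

lemma lipschitzWith_integral_comp_add {E F : Type*} [NormedAddCommGroup E]
    [NormedAddCommGroup F] [NormedSpace ℝ F] {g : E → F} (hg : LipschitzWith K g)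
    {X : Ω → E} (hX : Integrable X μ) :
    LipschitzWith K fun a => ∫ ω, g (X ω + a) ∂μ := by
  refine LipschitzWith.of_dist_le_mul fun a b => ?_
  simpa [dist_eq_norm] using norm_integral_comp_sub_le_of_lipschitzWith hg
    (hX.add (integrable_const a)) (hX.add (integrable_const b))

lemma StronglyMonotone.integral_comp_add {g : ℝ → ℝ} (hg : StronglyMonotone c g)
    (hg_lip : LipschitzWith K g) {X : Ω → ℝ} (hX : Integrable X μ) :
    StronglyMonotone c fun a => ∫ ω, g (X ω + a) ∂μ := by
  intro a b hab
  have h_int (a : ℝ) : Integrable (fun ω => g (X ω + a)) μ :=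
    integrable_comp_of_lipschitzWith hg_lip (hX.add (integrable_const a))
  calc c * (b - a) = ∫ _, c * (b - a) ∂μ := by simp
    _ ≤ ∫ ω, (g (X ω + b) - g (X ω + a)) ∂μ :=
      integral_mono (integrable_const _) ((h_int b).sub (h_int a)) fun ω => by
        simpa using hg (add_le_add_right hab (X ω))
    _ = ∫ ω, g (X ω + b) ∂μ - ∫ ω, g (X ω + a) ∂μ := integral_sub (h_int b) (h_int a)

lemma StronglyMonotone.exists_integral_comp_add_eq (hc : 0 < c) {g : ℝ → ℝ}
    (hg : StronglyMonotone c g) (hg_lip : LipschitzWith K g) {X : Ω → ℝ}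
    (hX : Integrable X μ) (z : ℝ) : ∃ a, ∫ ω, g (X ω + a) ∂μ = z :=
  (hg.integral_comp_add hg_lip hX).surjective hc
    (lipschitzWith_integral_comp_add hg_lip hX).continuous z

lemma StronglyMonotone.tendsto_of_integral_comp_add_eq {ι : Type*} {l : Filter ι}
    [l.IsCountablyGenerated] (hc : 0 < c) {g : ι → ℝ → ℝ} {g' : ℝ → ℝ}
    (hg : ∀ᶠ i in l, StronglyMonotone c (g i)) (hg_lip : ∀ᶠ i in l, LipschitzWith K (g i))
    (hg_lim : ∀ x, Tendsto (fun i => g i x) l (𝓝 (g' x))) {X : ι → Ω → ℝ} {X' : Ω → ℝ}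
    (hX : ∀ᶠ i in l, Integrable (X i) μ) (hX' : Integrable X' μ)
    (hX_lim : Tendsto (fun i => ∫ ω, ‖X i ω - X' ω‖ ∂μ) l (𝓝 0)) {a z : ι → ℝ} {b : ℝ}
    (ha : ∀ᶠ i in l, ∫ ω, g i (X i ω + a i) ∂μ = z i)
    (hz : Tendsto z l (𝓝 (∫ ω, g' (X' ω + b) ∂μ))) : Tendsto a l (𝓝 b) := by
  have h_mono : ∀ᶠ i in l, StronglyMonotone c fun a => ∫ ω, g i (X i ω + a) ∂μ := by
    filter_upwards [hg, hg_lip, hX] with i hi hi_lip hXi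
    exact hi.integral_comp_add hi_lip hXi
  have h_at_b : Tendsto (fun i => ∫ ω, g i (X i ω + b) ∂μ) l (𝓝 (∫ ω, g' (X' ω + b) ∂μ)) :=
    tendsto_integral_comp_of_tendsto_integral_norm_sub hg_lip hg_lim
      (hX.mono fun i hi => hi.add (integrable_const b)) (hX'.add (integrable_const b))
      (by simpa using hX_lim)
  refine StronglyMonotone.tendsto_of_tendsto_sub hc h_mono ?_
  simpa using (hz.congr' (ha.mono fun i hi => hi.symm)).sub h_at_b

end Shift

lemma lipschitzWith_of_tendsto {ι E F : Type*} [PseudoEMetricSpace E] [PseudoEMetricSpace F]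
    {l : Filter ι} [l.NeBot] {K : ℝ≥0} {g : ι → E → F} {g' : E → F}
    (hg : ∀ᶠ i in l, LipschitzWith K (g i))
    (hlim : ∀ x, Tendsto (fun i => g i x) l (𝓝 (g' x))) : LipschitzWith K g' :=
  (isClosed_setOfPred_lipschitzWith K).mem_of_tendsto (tendsto_pi_nhds.2 hlim) hg

lemma CadlagOn.of_continuousOn {E : Type*} [TopologicalSpace E] {f : ℝ → E}
    (hf : ContinuousOn f (Ici 0)) : CadlagOn f :=
  ⟨fun t ht => (hf t ht).mono (Ici_subset_Ici.2 ht),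
    fun t ht => ⟨f t, (hf.continuousAt (Ici_mem_nhds ht)).tendsto.mono_left inf_le_left⟩⟩

lemma CadlagOn.sub {E : Type*} [TopologicalSpace E] [Sub E] [ContinuousSub E] {f g : ℝ → E}
    (hf : CadlagOn f) (hg : CadlagOn g) : CadlagOn fun t => f t - g t := by
  refine ⟨fun t ht => (hf.1 t ht).sub (hg.1 t ht), fun t ht => ?_⟩
  obtain ⟨a, ha⟩ := hf.2 t ht
  obtain ⟨b, hb⟩ := hg.2 t ht
  exact ⟨a - b, ha.sub hb⟩

namespace NiceProcess

variable {Ω : Type*} [MeasurableSpace Ω] {μ : Measure Ω} {Y : ℝ → Ω → ℝ}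

lemma integrable_and_tendsto_integral_norm_sub [IsFiniteMeasure μ] (hY : NiceProcess μ Y)
    {t : ℝ} {l : Filter ℝ} [l.NeBot] [l.IsCountablyGenerated] (hl : l ≤ 𝓝 t)
    (hl_nonneg : ∀ᶠ s in l, 0 ≤ s) {Y' : Ω → ℝ}
    (hlim : ∀ᵐ ω ∂μ, Tendsto (fun s => Y s ω) l (𝓝 (Y' ω))) :
    Integrable Y' μ ∧ Tendsto (fun s => ∫ ω, ‖Y s ω - Y' ω‖ ∂μ) l (𝓝 0) := by
  have h_bdd : ∀ᶠ s in l, s ≤ |t| + 1 :=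
    hl (Iic_mem_nhds ((le_abs_self t).trans_lt (lt_add_one _)))
  exact integrable_and_tendsto_integral_norm_sub_of_uniformIntegrable_mem
    (hl_nonneg.and h_bdd) (hY.unifInt (|t| + 1) (by positivity)) hlim

variable [IsProbabilityMeasure μ] {c : ℝ} {K : ℝ≥0} {h : ℝ → ℝ → ℝ} {w z : ℝ → ℝ}

lemma tendsto_of_integral_comp_add_eq (hY : NiceProcess μ Y) (hc : 0 < c)
    (h_mono : ∀ t, 0 ≤ t → StronglyMonotone c (h t))
    (h_lip : ∀ t, 0 ≤ t → LipschitzWith K (h t))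
    (hw : ∀ t, 0 ≤ t → ∫ ω, h t (Y t ω + w t) ∂μ = z t)
    {t : ℝ} {l : Filter ℝ} [l.NeBot] [l.IsCountablyGenerated] (hl : l ≤ 𝓝 t)
    (hl_nonneg : ∀ᶠ s in l, 0 ≤ s) {h' : ℝ → ℝ} {Y' : Ω → ℝ}
    (h_lim : ∀ x, Tendsto (fun s => h s x) l (𝓝 (h' x)))
    (hY_lim : ∀ᵐ ω ∂μ, Tendsto (fun s => Y s ω) l (𝓝 (Y' ω))) {b : ℝ}
    (hz : Tendsto z l (𝓝 (∫ ω, h' (Y' ω + b) ∂μ))) : Tendsto w l (𝓝 b) := by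
  obtain ⟨hY', hY_L1⟩ := hY.integrable_and_tendsto_integral_norm_sub hl hl_nonneg hY_lim
  exact StronglyMonotone.tendsto_of_integral_comp_add_eq hc (hl_nonneg.mono h_mono)
    (hl_nonneg.mono h_lip) h_lim (hl_nonneg.mono hY.integrable) hY' hY_L1 (hl_nonneg.mono hw) hz

lemma cadlagOn_of_integral_comp_add_eq (hY : NiceProcess μ Y) (hc : 0 < c)
    (h_cadlag : ∀ x, CadlagOn fun t => h t x)
    (h_mono : ∀ t, 0 ≤ t → StronglyMonotone c (h t))
    (h_lip : ∀ t, 0 ≤ t → LipschitzWith K (h t)) (hz : CadlagOn z)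
    (hw : ∀ t, 0 ≤ t → ∫ ω, h t (Y t ω + w t) ∂μ = z t) : CadlagOn w := by
  refine ⟨fun t ht => ?_, fun t ht => ?_⟩
  · have hl : ∀ᶠ s in 𝓝[≥] t, 0 ≤ s := eventually_mem_nhdsWithin.mono fun _ hs => ht.trans hs
    refine hY.tendsto_of_integral_comp_add_eq hc h_mono h_lip hw nhdsWithin_le_nhds hl
      (fun x => (h_cadlag x).1 t ht) (ae_of_all μ fun ω => (hY.cadlag ω).1 t ht) ?_
    rw [hw t ht]
    exact hz.1 t ht
  · have hl : ∀ᶠ s in 𝓝[<] t, 0 ≤ s := nhdsWithin_le_nhds (Ici_mem_nhds ht)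
    choose h' h_lim using fun x => (h_cadlag x).2 t ht
    choose Y' hY_lim using fun ω => (hY.cadlag ω).2 t ht
    obtain ⟨z', hz'⟩ := hz.2 t ht
    have hY' : Integrable Y' μ := (hY.integrable_and_tendsto_integral_norm_sub
      nhdsWithin_le_nhds hl (ae_of_all μ hY_lim)).1
    have h'_mono : StronglyMonotone c h' := .of_tendsto (hl.mono h_mono) h_lim
    have h'_lip : LipschitzWith K h' := lipschitzWith_of_tendsto (hl.mono h_lip) h_lim
    obtain ⟨b, rfl⟩ := h'_mono.exists_integral_comp_add_eq hc h'_lip hY' z'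
    exact ⟨b, hY.tendsto_of_integral_comp_add_eq hc h_mono h_lip hw nhdsWithin_le_nhds hl h_lim
      (ae_of_all μ hY_lim) hz'⟩

lemma cadlagOn_neg_integral (hY : NiceProcess μ Y) : CadlagOn fun t => -∫ ω, Y t ω ∂μ := by
  refine hY.cadlagOn_of_integral_comp_add_eq (h := fun _ => id) (z := 0) one_pos
    (fun x => .of_continuousOn continuousOn_const) (fun _ _ x y _ => by simp)
    (fun _ _ => LipschitzWith.id) (.of_continuousOn continuousOn_const) fun t ht => ?_
  simp [integral_add (hY.integrable t ht) (integrable_const _)]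

end NiceProcess

namespace CondH

variable {h : ℝ → ℝ → ℝ} {Mh Lh ch Ch : ℝ}

lemma cadlagOn (hH : CondH h Mh Lh ch Ch) (x : ℝ) : CadlagOn fun t => h t x :=
  .of_continuousOn (LipschitzOnWith.of_dist_le_mul (K := ⟨Lh, hH.Lh_pos.le⟩)
    fun t ht s hs => hH.lip_time s t x hs ht).continuousOn

lemma stronglyMonotone (hH : CondH h Mh Lh ch Ch) {t : ℝ} (ht : 0 ≤ t) :
    StronglyMonotone ch (h t) := fun x y hxy => by
  have h_le : h t x ≤ h t y := (hH.strict_mono t ht).monotone hxy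
  simpa only [abs_of_nonneg (sub_nonneg.2 hxy), abs_of_nonneg (sub_nonneg.2 h_le)] using
    hH.lip_lower t y x ht

lemma lipschitzWith (hH : CondH h Mh Lh ch Ch) {t : ℝ} (ht : 0 ≤ t) :
    LipschitzWith ⟨Ch, hH.Ch_pos.le⟩ (h t) :=
  LipschitzWith.of_dist_le_mul fun x y => hH.lip_upper t x y ht

end CondH

theorem stmt_3_general {Ω : Type*} [MeasurableSpace Ω] {μ : Measure Ω} [IsProbabilityMeasure μ]
    {h : ℝ → ℝ → ℝ} {c : ℝ} {K : ℝ≥0} (hc : 0 < c) (h_cadlag : ∀ x, CadlagOn fun t => h t x)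
    (h_mono : ∀ t, 0 ≤ t → StronglyMonotone c (h t))
    (h_lip : ∀ t, 0 ≤ t → LipschitzWith K (h t)) {Y : ℝ → Ω → ℝ} (hY : NiceProcess μ Y)
    {z zb : ℝ → ℝ} (hz : CadlagOn z)
    (heq : ∀ t, 0 ≤ t → (∫ ω, h t (Y t ω - (∫ ω', Y t ω' ∂μ) + zb t) ∂μ) = z t) :
    CadlagOn zb := by
  have h_shift : CadlagOn fun t => zb t - ∫ ω, Y t ω ∂μ :=
    hY.cadlagOn_of_integral_comp_add_eq hc h_cadlag h_mono h_lip hz fun t ht => by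
      simpa only [add_sub, sub_add_eq_add_sub] using heq t ht
  simpa using h_shift.sub hY.cadlagOn_neg_integral

/-- if `z` is càdlàg and `E[h(t, Y_t - E Y_t + z̄_t)] = z_t` for all `t ≥ 0`,
then `z̄` is càdlàg. -/
theorem stmt_3 {Ω : Type*} [MeasurableSpace Ω] (μ : Measure Ω) [IsProbabilityMeasure μ]
    (h : ℝ → ℝ → ℝ) (Mh Lh ch Ch : ℝ) (hH : CondH h Mh Lh ch Ch)
    (Y : ℝ → Ω → ℝ) (hY : NiceProcess μ Y)
    (z zb : ℝ → ℝ) (hz : CadlagOn z)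
    (heq : ∀ t : ℝ, 0 ≤ t → (∫ ω, h t (Y t ω - (∫ ω', Y t ω' ∂μ) + zb t) ∂μ) = z t) :
    CadlagOn zb :=
  stmt_3_general hH.ch_pos hH.cadlagOn (fun _ => hH.stronglyMonotone)
    (fun _ => hH.lipschitzWith) hY hz heq
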